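/- arXiv:2201.13112 — 4 statements merged into one kernel-verified Lean document; each statement's English description precedes it below -/
import Mathlib

section
/- Let X and Ω be finite nonempty sets, p* and p† probability vectors on Ω, ε > 0 with d(p†, p*) ≤ ε, g : X × Ω → ℝ, h ∈ ℝ, α ∈ (0,1), and ξ > 0 with 2ε < ξ. Define G_t(x) = inf_{p ∈ A(p*, ε)} ∑_{w ∈ Ω} 1[g(x,w) > h] p(w) and G̃(x) = ∑_{w ∈ Ω} 1[g(x,w) > h] p†(w). If G_t(x) ≤ α − ξ for every x ∈ X, then G̃(x) < α for every x ∈ X; that is, if no design is feasible for the distributionally robust chance constraint at level α − ξ, then the chance-constrained problem at level α under the true distribution p† has no feasible point. -/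
open Finset

/-- A probability vector on a finite set `Ω`. -/
def IsProbVec {Ω : Type*} [Fintype Ω] (p : Ω → ℝ) : Prop :=
  (∀ w, 0 ≤ p w) ∧ ∑ w, p w = 1

/-- The L1 ambiguity set of radius `ε` around a reference distribution `pstar`. -/
def AmbiguitySet {Ω : Type*} [Fintype Ω] (pstar : Ω → ℝ) (ε : ℝ) : Set (Ω → ℝ) :=
  {p | IsProbVec p ∧ ∑ w, |p w - pstar w| ≤ ε}

/-- If no design is feasible for the distributionally robust chance constraint at
level `α − ξ` (with `2ε < ξ`), then the chance-constrained problem at level `α`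
under the true distribution `p†` has no feasible point. -/
theorem drcc_infeasible_implies_cc_infeasible
    {X : Type*} [Fintype X] [Nonempty X] {Ω : Type*} [Fintype Ω] [Nonempty Ω]
    (pstar pdag : Ω → ℝ) (hpstar : IsProbVec pstar) (hpdag : IsProbVec pdag)
    (ε : ℝ) (hε : 0 < ε) (hdist : ∑ w, |pdag w - pstar w| ≤ ε)
    (g : X → Ω → ℝ) (h α ξ : ℝ) (hα : α ∈ Set.Ioo (0:ℝ) 1) (hξ : 0 < ξ) (hεξ : 2 * ε < ξ)
    (Gt : X → ℝ)
    (hGt : ∀ x, Gt x =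
      sInf ((fun p => ∑ w, (if h < g x w then (1:ℝ) else 0) * p w) '' AmbiguitySet pstar ε))
    (Gtil : X → ℝ)
    (hGtil : ∀ x, Gtil x = ∑ w, (if h < g x w then (1:ℝ) else 0) * pdag w)
    (hinfeas : ∀ x : X, Gt x ≤ α - ξ) :
    ∀ x : X, Gtil x < α := by
  intro x
  have key : Gtil x - 2 * ε ≤ Gt x := by
    rw [hGt x]
    apply le_csInf
    · exact ⟨_, pdag, ⟨hpdag, hdist⟩, rfl⟩
    · rintro _ ⟨p, ⟨_, hp⟩, rfl⟩
      have h1 : Gtil x ≤ ∑ w, ((if h < g x w then (1:ℝ) else 0) * p w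
          + (|pdag w - pstar w| + |p w - pstar w|)) := by
        rw [hGtil x]
        apply Finset.sum_le_sum
        intro w _
        have a1 := le_abs_self (pdag w - pstar w)
        have a2 := neg_abs_le (p w - pstar w)
        have a3 := abs_nonneg (pdag w - pstar w)
        have a4 := abs_nonneg (p w - pstar w)
        split_ifs <;> linarith
      rw [Finset.sum_add_distrib, Finset.sum_add_distrib] at h1
      show _ ≤ ∑ w, (if h < g x w then (1:ℝ) else 0) * p w
      linarith
  have := hinfeas x
  linarith
end

section
/- Let X and Ω be finite nonempty sets, p* and p† probability vectors on Ω, ε > 0 with d(p†, p*) ≤ ε, g : X × Ω → ℝ, h ∈ ℝ, α ∈ (0,1), and ξ > 0 with 2ε < ξ. Define G_t(x) = inf_{p ∈ A(p*, ε)} ∑_{w ∈ Ω} 1[g(x,w) > h] p(w) and G̃(x) = ∑_{w ∈ Ω} 1[g(x,w) > h] p†(w). If x ∈ X satisfies G̃(x) > α, then G_t(x) > α − ξ; that is, every feasible point of the chance-constrained problem at level α under p† is feasible for the distributionally robust chance constraint at the relaxed level α − ξ. -/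
open Finset

/-- Every feasible point of the chance-constrained problem at level `α` under
`p†` is feasible for the distributionally robust chance constraint at the
relaxed level `α − ξ` (when `2ε < ξ`). -/
theorem cc_feasible_implies_drcc_feasible
    {X : Type*} [Fintype X] [Nonempty X] {Ω : Type*} [Fintype Ω] [Nonempty Ω]
    (pstar pdag : Ω → ℝ) (hpstar : IsProbVec pstar) (hpdag : IsProbVec pdag)
    (ε : ℝ) (hε : 0 < ε) (hdist : ∑ w, |pdag w - pstar w| ≤ ε)
    (g : X → Ω → ℝ) (h α ξ : ℝ) (hα : α ∈ Set.Ioo (0:ℝ) 1) (hξ : 0 < ξ) (hεξ : 2 * ε < ξ)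
    (Gt : X → ℝ)
    (hGt : ∀ x, Gt x =
      sInf ((fun p => ∑ w, (if h < g x w then (1:ℝ) else 0) * p w) '' AmbiguitySet pstar ε))
    (Gtil : X → ℝ)
    (hGtil : ∀ x, Gtil x = ∑ w, (if h < g x w then (1:ℝ) else 0) * pdag w)
    (x : X) (hfeas : α < Gtil x) :
    α - ξ < Gt x := by
  have key : Gtil x - 2 * ε ≤ Gt x := by
    rw [hGt]
    apply le_csInf
    · exact ⟨_, pdag, ⟨hpdag, hdist⟩, rfl⟩
    · rintro _ ⟨p, ⟨_, hp⟩, rfl⟩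
      rw [hGtil]
      have h1 : ∑ w, (if h < g x w then (1:ℝ) else 0) * pdag w ≤
          ∑ w, ((if h < g x w then (1:ℝ) else 0) * p w +
            |pdag w - pstar w| + |p w - pstar w|) := by
        apply Finset.sum_le_sum
        intro w _
        have a1 := le_abs_self (pdag w - pstar w)
        have a2 := neg_abs_le (p w - pstar w)
        have a3 := abs_nonneg (pdag w - pstar w)
        have a4 := abs_nonneg (p w - pstar w)
        split_ifs <;> linarith
      rw [Finset.sum_add_distrib, Finset.sum_add_distrib] at h1
      simp only at h1 ⊢
      linarith
  linarith
end

section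
/- Let X and Ω be finite nonempty sets, p* and p† probability vectors on Ω, and ε > 0 with d(p†, p*) ≤ ε. Let f, g : X × Ω → ℝ, B ≥ 0 with |f(x,w)| ≤ B for all (x,w) ∈ X × Ω, h ∈ ℝ, α ∈ (0,1), and ξ > 0 with 2ε < ξ and 2Bε < ξ. Define F_t(x) = inf_{p ∈ A(p*, ε)} ∑_{w} f(x,w) p(w), G_t(x) = inf_{p ∈ A(p*, ε)} ∑_{w} 1[g(x,w) > h] p(w), F̃(x) = ∑_{w} f(x,w) p†(w), and G̃(x) = ∑_{w} 1[g(x,w) > h] p†(w). Suppose the set S̃ = {x ∈ X : G̃(x) > α} is nonempty and x̃* ∈ S̃ maximizes F̃ over S̃. Then: (i) the set S = {x ∈ X : G_t(x) > α − ξ} is nonempty; and (ii) if x*_t ∈ S maximizes F_t over S and x̂ ∈ X satisfies G_t(x̂) > α − 3ξ and F_t(x*_t) − F_t(x̂) < 2ξ, then G̃(x̂) > α − 3ξ and F̃(x̃*) − F̃(x̂) < 3ξ. That is, any 2ξ-accurate solution of the distributionally robust chance-constrained problem at level α − ξ is a 3ξ-accurate solution of the chance-constrained problem at level α under the true distribution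 p†. -/
open Finset

theorem drcc_aux {Ω : Type*} [Fintype Ω] (pstar pdag : Ω → ℝ) (hpdag : IsProbVec pdag)
    (ε : ℝ) (hdist : ∑ w, |pdag w - pstar w| ≤ ε) (φ : Ω → ℝ) (C : ℝ) (hC : 0 ≤ C)
    (hφ : ∀ w, |φ w| ≤ C) :
    sInf ((fun p => ∑ w, φ w * p w) '' AmbiguitySet pstar ε) ≤ ∑ w, φ w * pdag w ∧
    ∑ w, φ w * pdag w - 2 * C * ε ≤
      sInf ((fun p => ∑ w, φ w * p w) '' AmbiguitySet pstar ε) := by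
  have key : ∀ y ∈ ((fun p => ∑ w, φ w * p w) '' AmbiguitySet pstar ε),
      ∑ w, φ w * pdag w - 2 * C * ε ≤ y := by
    rintro y ⟨p, ⟨_, hp⟩, rfl⟩
    have h1 : ∑ w, φ w * pdag w - ∑ w, φ w * p w
        ≤ ∑ w, C * (|pdag w - pstar w| + |p w - pstar w|) := by
      rw [← Finset.sum_sub_distrib]
      apply Finset.sum_le_sum
      intro w _
      have h2 : |pdag w - p w| ≤ |pdag w - pstar w| + |p w - pstar w| := by
        rw [abs_sub_comm (p w)]
        exact abs_sub_le _ _ _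
      calc φ w * pdag w - φ w * p w = φ w * (pdag w - p w) := by ring
        _ ≤ |φ w| * |pdag w - p w| := by rw [← abs_mul]; exact le_abs_self _
        _ ≤ C * (|pdag w - pstar w| + |p w - pstar w|) :=
          mul_le_mul (hφ w) h2 (abs_nonneg _) hC
    rw [← Finset.mul_sum, Finset.sum_add_distrib] at h1
    have h3 := mul_le_mul_of_nonneg_left (add_le_add hdist hp) hC
    change _ ≤ ∑ w, φ w * p w
    linarith
  have hmem : (∑ w, φ w * pdag w) ∈ ((fun p => ∑ w, φ w * p w) '' AmbiguitySet pstar ε) :=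
    ⟨pdag, ⟨hpdag, hdist⟩, rfl⟩
  exact ⟨csInf_le ⟨_, key⟩ hmem, le_csInf ⟨_, hmem⟩ key⟩

/-- Any `2ξ`-accurate solution of the distributionally robust chance-constrained
problem at level `α − ξ` is a `3ξ`-accurate solution of the chance-constrained
problem at level `α` under the true distribution `p†`. -/
theorem drcc_accurate_implies_cc_accurate
    {X : Type*} [Fintype X] [Nonempty X] {Ω : Type*} [Fintype Ω] [Nonempty Ω]
    (pstar pdag : Ω → ℝ) (hpstar : IsProbVec pstar) (hpdag : IsProbVec pdag)
    (ε : ℝ) (hε : 0 < ε) (hdist : ∑ w, |pdag w - pstar w| ≤ ε)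
    (f g : X → Ω → ℝ) (B : ℝ) (hB : 0 ≤ B) (hfB : ∀ x w, |f x w| ≤ B)
    (h α ξ : ℝ) (hα : α ∈ Set.Ioo (0:ℝ) 1) (hξ : 0 < ξ)
    (hεξ : 2 * ε < ξ) (hBεξ : 2 * B * ε < ξ)
    (Ft : X → ℝ)
    (hFt : ∀ x, Ft x = sInf ((fun p => ∑ w, f x w * p w) '' AmbiguitySet pstar ε))
    (Gt : X → ℝ)
    (hGt : ∀ x, Gt x =
      sInf ((fun p => ∑ w, (if h < g x w then (1:ℝ) else 0) * p w) '' AmbiguitySet pstar ε))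
    (Ftil : X → ℝ) (hFtil : ∀ x, Ftil x = ∑ w, f x w * pdag w)
    (Gtil : X → ℝ)
    (hGtil : ∀ x, Gtil x = ∑ w, (if h < g x w then (1:ℝ) else 0) * pdag w)
    (xtilstar : X) (hxts_feas : α < Gtil xtilstar)
    (hxts_max : ∀ x : X, α < Gtil x → Ftil x ≤ Ftil xtilstar) :
    (∃ x : X, α - ξ < Gt x) ∧
    ∀ xtstar : X, (α - ξ < Gt xtstar ∧ ∀ x : X, α - ξ < Gt x → Ft x ≤ Ft xtstar) →
      ∀ xhat : X, α - 3 * ξ < Gt xhat → Ft xtstar - Ft xhat < 2 * ξ →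
        α - 3 * ξ < Gtil xhat ∧ Ftil xtilstar - Ftil xhat < 3 * ξ := by
  have hF := fun x => drcc_aux pstar pdag hpdag ε hdist (f x) B hB (hfB x)
  have hG := fun x => drcc_aux pstar pdag hpdag ε hdist
    (fun w => if h < g x w then (1:ℝ) else 0) 1 zero_le_one
    (by intro w; split_ifs <;> simp)
  simp only [← hFt, ← hFtil] at hF
  simp only [← hGt, ← hGtil] at hG
  have hS : α - ξ < Gt xtilstar := by linarith [(hG xtilstar).2]
  refine ⟨⟨_, hS⟩, ?_⟩
  rintro xt ⟨_, hmax⟩ xh h1 h2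
  have := hmax _ hS
  exact ⟨by linarith [(hG xh).1], by linarith [(hF xh).1, (hF xtilstar).2]⟩
end

section
/- Let Z be a set, k : Z × Z → ℝ a symmetric positive semidefinite kernel (i.e., for any finite list of points in Z the Gram matrix of k is positive semidefinite), σ² > 0, and let z₁, …, z_{n+1} ∈ Z and a test point z ∈ Z be given. For 1 ≤ j ≤ n+1 let K_j be the j × j matrix with entries k(z_a, z_b) for 1 ≤ a, b ≤ j, let k_j(z) ∈ ℝ^j have entries k(z, z_a), and define the Gaussian-process posterior variance σ_j²(z) = k(z,z) − k_j(z)ᵀ (K_j + σ² I_j)⁻¹ k_j(z), where I_j is the j × j identity matrix. Then σ_{n+1}²(z) ≤ σ_n²(z); that is, the posterior variance at any point is non-increasing as observations are added. -/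
open Matrix

lemma gp_aux_le {m : ℕ} (A : Matrix (Fin m) (Fin m) ℝ) (hA : A.PosDef) (b x : Fin m → ℝ) :
    2 * (b ⬝ᵥ x) - x ⬝ᵥ (A *ᵥ x) ≤ b ⬝ᵥ (A⁻¹ *ᵥ b) := by
  have hdet : IsUnit A.det := (Matrix.isUnit_iff_isUnit_det A).1 hA.isUnit
  obtain ⟨y, hy⟩ : ∃ y, y = A⁻¹ *ᵥ b := ⟨_, rfl⟩
  have hAy : A *ᵥ y = b := by
    rw [hy, Matrix.mulVec_mulVec, Matrix.mul_nonsing_inv A hdet, Matrix.one_mulVec]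
  have hT : Aᵀ = A := by
    have := hA.isHermitian.eq
    rwa [Matrix.conjTranspose_eq_transpose_of_trivial] at this
  have h := hA.posSemidef.dotProduct_mulVec_nonneg (y - x)
  rw [star_trivial, Matrix.mulVec_sub, hAy, sub_dotProduct, dotProduct_sub, dotProduct_sub] at h
  have h1 : y ⬝ᵥ (A *ᵥ x) = b ⬝ᵥ x := by
    rw [Matrix.dotProduct_mulVec, ← Matrix.mulVec_transpose, hT, hAy]
  rw [← hy]
  rw [h1, dotProduct_comm y b, dotProduct_comm x b] at h
  linarith

lemma gp_aux_mono {n : ℕ} (A : Matrix (Fin (n+1)) (Fin (n+1)) ℝ) (hA : A.PosDef)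
    (B : Matrix (Fin n) (Fin n) ℝ) (hB : B.PosDef)
    (hAB : ∀ i j, B i j = A i.castSucc j.castSucc)
    (b : Fin (n+1) → ℝ) (c : Fin n → ℝ) (hc : ∀ i, c i = b i.castSucc) :
    c ⬝ᵥ (B⁻¹ *ᵥ c) ≤ b ⬝ᵥ (A⁻¹ *ᵥ b) := by
  have hdet : IsUnit B.det := (Matrix.isUnit_iff_isUnit_det B).1 hB.isUnit
  obtain ⟨y, hy⟩ : ∃ y, y = B⁻¹ *ᵥ c := ⟨_, rfl⟩
  have hBy : B *ᵥ y = c := by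
    rw [hy, Matrix.mulVec_mulVec, Matrix.mul_nonsing_inv B hdet, Matrix.one_mulVec]
  have h := gp_aux_le A hA b (Fin.snoc (α := fun _ => ℝ) y 0)
  have h1 : b ⬝ᵥ (Fin.snoc (α := fun _ => ℝ) y 0) = c ⬝ᵥ y := by
    simp [dotProduct, Fin.sum_univ_castSucc, hc]
  have h2 : (Fin.snoc (α := fun _ => ℝ) y 0) ⬝ᵥ (A *ᵥ (Fin.snoc (α := fun _ => ℝ) y 0))
      = y ⬝ᵥ (B *ᵥ y) := by
    simp [dotProduct, mulVec, Fin.sum_univ_castSucc, hAB]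
  rw [h1, h2, hBy, dotProduct_comm y c] at h
  rw [← hy]
  linarith

/-- The Gaussian-process posterior variance at any test point is non-increasing
as observations are added: with a symmetric positive semidefinite kernel `k`,
noise variance `σ² > 0`, and observation points `z₁, …, z_{n+1}`, the posterior
variance after `n+1` observations is at most the posterior variance after the
first `n` observations. -/
theorem gp_posterior_variance_antitone
    {Z : Type*} (k : Z → Z → ℝ) (hsymm : ∀ a b, k a b = k b a)
    (hpsd : ∀ (m : ℕ) (v : Fin m → Z),
      (Matrix.of (fun a b => k (v a) (v b)) : Matrix (Fin m) (Fin m) ℝ).PosSemidef)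
    (σ2 : ℝ) (hσ2 : 0 < σ2) (n : ℕ) (z : Fin (n + 1) → Z) (zt : Z)
    (postVar : (j : ℕ) → j ≤ n + 1 → ℝ)
    (hpostVar : ∀ (j : ℕ) (hj : j ≤ n + 1),
      postVar j hj =
        k zt zt -
          (fun a : Fin j => k zt (z (Fin.castLE hj a))) ⬝ᵥ
            (((Matrix.of fun a b : Fin j => k (z (Fin.castLE hj a)) (z (Fin.castLE hj b))) +
                σ2 • (1 : Matrix (Fin j) (Fin j) ℝ))⁻¹ *ᵥ
              fun a : Fin j => k zt (z (Fin.castLE hj a)))) :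
    postVar (n + 1) le_rfl ≤ postVar n (Nat.le_succ n) := by
  have hpd : ∀ (j : ℕ) (hj : j ≤ n + 1),
      ((Matrix.of fun a b : Fin j => k (z (Fin.castLE hj a)) (z (Fin.castLE hj b))) +
                σ2 • (1 : Matrix (Fin j) (Fin j) ℝ)).PosDef := fun j hj =>
    Matrix.PosDef.posSemidef_add (hpsd j (fun a => z (Fin.castLE hj a)))
      (Matrix.PosDef.one.smul hσ2)
  rw [hpostVar, hpostVar]
  refine sub_le_sub_left (gp_aux_mono _ (hpd _ _) _ (hpd _ _) ?_ _ _ ?_) _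
  · intro i j
    simp [Matrix.one_apply]
    rfl
  · intro i
    rfl
end
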